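/- arXiv:1806.03523 — 2 statements merged into one kernel-verified Lean document; each statement's English description precedes it below -/
import Mathlib

section
/- Let a be linked by I over M where I is generated by an M-regular sequence, suppose Ass(M/IM) = Min Ass(M/IM) (all associated primes are minimal), and set t = grade_M(a), c = ⋂_{p ∈ Ass(M/IM) \ V(a)} p. Then cd(a, M) ∈ {t, cd(a, H^t_c(M)) + t}. -/
universe u

open RingTheory.Sequence CategoryTheory

noncomputable section

/-- `N :_M a`, set of `m : M` with `a • m ⊆ N`. -/
def Submodule.modColon {R : Type u} [CommRing R] {M : Type u} [AddCommGroup M] [Module R M]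
    (N : Submodule R M) (a : Ideal R) : Submodule R M :=
  ⨅ r ∈ a, N.comap (LinearMap.lsmul R M r)

/-- The ideals `a` and `b` are linked by `I` over `M`: `I ⊆ a ⊓ b` is generated by an
`M`-regular sequence, `bM = IM :_M a`, `aM = IM :_M b`, and `aM ≠ M ≠ bM`. -/
def Ideal.IsLinkedBy {R : Type u} [CommRing R] (M : Type u) [AddCommGroup M] [Module R M]
    (I a b : Ideal R) : Prop :=
  (∃ rs : List R, RingTheory.Sequence.IsRegular M rs ∧ I = Ideal.ofList rs) ∧
  I ≤ a ⊓ b ∧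
  a • (⊤ : Submodule R M) ≠ ⊤ ∧ b • (⊤ : Submodule R M) ≠ ⊤ ∧
  Submodule.modColon (I • (⊤ : Submodule R M)) a = b • (⊤ : Submodule R M) ∧
  Submodule.modColon (I • (⊤ : Submodule R M)) b = a • (⊤ : Submodule R M)

/-- Cohomological dimension `cd(a, M) = sup { i | H^i_a(M) ≠ 0 }`. -/
def cohDim {R : Type u} [CommRing R] (a : Ideal R) (M : Type u) [AddCommGroup M]
    [Module R M] : ℕ∞ :=
  sSup {n : ℕ∞ | ∃ i : ℕ, n = i ∧ Nontrivial ↥((localCohomology a i).obj (ModuleCat.of R M))}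

/-- `grade_M(a)`: the supremum of lengths of `M`-regular sequences contained in `a`. -/
def gradeM {R : Type u} [CommRing R] (a : Ideal R) (M : Type u) [AddCommGroup M]
    [Module R M] : ℕ :=
  sSup {n : ℕ | ∃ rs : List R, rs.length = n ∧ (∀ r ∈ rs, r ∈ a) ∧
    RingTheory.Sequence.IsRegular M rs}

variable {R : Type u} [CommRing R] [IsNoetherianRing R]
variable {M : Type u} [AddCommGroup M] [Module R M] [Module.Finite R M] [Nontrivial M]

/-!
Write `I` for the ideal generated by the regular sequence, of length `t`, and `N = H^t_I(M)`.
Since `H^i_I(M)` vanishes for `i ≠ t`, every ideal `K ⊇ I` satisfies `H^{i+t}_K(M) ≅ H^i_K(N)`.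
For `K = a` this gives `cd(a, M) = cd(a, N) + t`, as linkage provides `a`-torsion in `M ⧸ IM`, so
that `Γ_a(N) ≅ H^t_a(M) ≠ 0` and `t` is the grade of `a`. For `K = c` it gives
`H^t_c(M) ≅ Γ_c(N)`. The associated primes of `N` are associated primes of `M ⧸ IM`, so each of them
contains `a` or `c`; hence `N ⧸ Γ_c(N)` is `a`-torsion, and the long exact sequence of
`0 → Γ_c(N) → N → N ⧸ Γ_c(N) → 0` shows that `cd(a, N)` is `0` or `cd(a, Γ_c(N))`.
-/

section ExtComparison

universe t w v u'

variable {A : Type t} [CommRing A] {C : Type u'} [Category.{v} C] [Abelian C]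

lemma homologyπ_eq_zero_iff {S : Type*} [Ring S] (K : CochainComplex (ModuleCat.{v} S) ℕ) {n : ℕ}
    (z : K.cycles n) :
    K.homologyπ n z = 0 ↔
      ∃ x : K.X ((ComplexShape.up ℕ).prev n), K.d _ n x = K.iCycles n z := by
  have hexact := (ShortComplex.ShortExact.moduleCat_exact_iff_function_exact _).1
    (ShortComplex.exact_of_g_is_cokernel (.mk _ _ (K.toCycles_comp_homologyπ _ n))
      (K.homologyIsCokernel _ n rfl))
  have hmono := (ModuleCat.mono_iff_injective (K.iCycles n)).1 inferInstance
  refine (hexact z).trans (exists_congr fun x ↦ ?_)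
  rw [← hmono.eq_iff]
  exact Eq.congr_left congr($(K.toCycles_i _ n) x)

lemma exact_iCycles_d {S : Type*} [Ring S] (K : CochainComplex (ModuleCat.{v} S) ℕ) (n : ℕ) :
    Function.Exact (K.iCycles n) (K.d n (n + 1)) :=
  (ShortComplex.ShortExact.moduleCat_exact_iff_function_exact _).1
    (ShortComplex.exact_of_f_is_kernel (.mk _ _ (K.iCycles_d n (n + 1)))
      (K.cyclesIsKernel n _ (by simp)))

variable {X X' Y : C} (P : ProjectiveResolution X)

section Cocycles

variable [Linear A C]

variable (A Y) in
/-- The `A`-module of `n`-cocycles of `Hom(P, Y)`, as a submodule of `P.complex.X n ⟶ Y`. -/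
abbrev homCocycles (n : ℕ) : Submodule A (P.complex.X n ⟶ Y) :=
  LinearMap.ker (Linear.leftComp A Y (P.complex.d (n + 1) n))

variable (A Y) in
/-- The identification of the cycles of the cochain complex `Hom(P, Y)` with `homCocycles`. -/
def cyclesToHomCocycles (n : ℕ) :
    (P.complex.linearYonedaObj A Y).cycles n →ₗ[A] homCocycles A Y P n :=
  ((P.complex.linearYonedaObj A Y).iCycles n).hom.codRestrict (homCocycles A Y P n)
    (exact_iCycles_d (P.complex.linearYonedaObj A Y) n).apply_apply_eq_zero

lemma cyclesToHomCocycles_surjective (n : ℕ) :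
    Function.Surjective (cyclesToHomCocycles A Y P n) := fun f ↦ by
  obtain ⟨z, hz⟩ := (exact_iCycles_d (P.complex.linearYonedaObj A Y) n f.1).1 f.2
  exact ⟨z, Subtype.ext hz⟩

end Cocycles

section Naturality

variable [Linear A C]

variable {P} {P' : ProjectiveResolution X'} {g : X' ⟶ X} (φ : P'.Hom P g)

variable (A Y) in
/-- The map of Hom complexes induced by a morphism of projective resolutions. -/
def linearYonedaMap :
    P.complex.linearYonedaObj A Y ⟶ P'.complex.linearYonedaObj A Y :=
  (HomologicalComplex.unopFunctor _ _).map
    ((((linearYoneda A C).obj Y).rightOp.mapHomologicalComplex _).map φ.hom).op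

lemma isoExt_hom_naturality [EnoughProjectives C] (n : ℕ) :
    ((Ext A C n).map g.op).app Y ≫ (P'.isoExt n Y).hom =
      (P.isoExt n Y).hom ≫ HomologicalComplex.homologyMap (linearYonedaMap A Y φ) n := by
  have hderived := congr(Quiver.Hom.unop
    $(ProjectiveResolution.isoLeftDerivedObj_inv_naturality g P' P φ.hom
      (by simpa using φ.hom_f_zero_comp_π_f_zero) ((linearYoneda A C).obj Y).rightOp n))
  have hop := congr(Quiver.Hom.unop $((CommSq.mk
    (HomologicalComplex.homologyOp_hom_naturality (linearYonedaMap A Y φ) n)).vert_inv.w))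
  refine (Category.assoc _ _ _).symm.trans ?_
  refine (congr($hderived ≫ ((P'.complex.linearYonedaObj A Y).homologyOp n).inv.unop)).trans ?_
  refine (Category.assoc _ _ _).trans (Eq.trans ?_ (Category.assoc _ _ _).symm)
  exact congr((P.isoLeftDerivedObj ((linearYoneda A C).obj Y).rightOp n).inv.unop ≫ $hop.symm)

end Naturality

variable [HasExt.{w} C]

lemma extMk_eq_zero_iff_exists_prev {n : ℕ} (f : P.complex.X n ⟶ Y)
    (hf : P.complex.d (n + 1) n ≫ f = 0) :
    P.extMk f (n + 1) rfl hf = 0 ↔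
      ∃ g : P.complex.X ((ComplexShape.up ℕ).prev n) ⟶ Y, P.complex.d n _ ≫ g = f := by
  cases n with
  | succ n =>
    rw [CochainComplex.prev_nat_succ]
    exact P.extMk_eq_zero_iff f (n + 2) rfl hf n rfl
  | zero =>
    have hd : P.complex.d 0 ((ComplexShape.up ℕ).prev 0) = 0 := P.complex.shape _ _ (by simp)
    simp only [hd, Limits.zero_comp, exists_const]
    rw [← P.extEquivCohomologyClass.apply_eq_iff_eq,
      ProjectiveResolution.extEquivCohomologyClass_extMk,
      ProjectiveResolution.extEquivCohomologyClass_zero,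
      CochainComplex.HomComplex.CohomologyClass.mk_eq_zero_iff,
      CochainComplex.HomComplex.Cocycle.toSingleMk_mem_coboundaries_iff _ _ _ _ _ 1 (by simp)]
    have hX : Limits.IsZero (P.cochainComplex.X 1) :=
      P.cochainComplex.isZero_of_isStrictlyLE 0 1 (by simp)
    refine ⟨fun ⟨g, hg⟩ ↦ ?_, fun h ↦ ⟨0, by simp [← h]⟩⟩
    rw [hX.eq_of_src g 0, Limits.comp_zero, eq_comm, Preadditive.IsIso.comp_left_eq_zero] at hg
    exact hg.symm

variable [Linear A C]

lemma smul_extMk {n : ℕ} (r : A) (f : P.complex.X n ⟶ Y) (m : ℕ) (hm : n + 1 = m)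
    (hf : P.complex.d m n ≫ f = 0) :
    r • P.extMk f m hm hf = P.extMk (r • f) m hm (by simp [hf]) := by
  rw [Abelian.Ext.smul_eq_comp_mk₀, P.extMk_comp_mk₀]
  simp

variable (A Y) in
/-- The class in `Ext X Y n` of an `n`-cocycle of `Hom(P, Y)`, as a linear map. -/
def homCocyclesToExt (n : ℕ) : homCocycles A Y P n →ₗ[A] Abelian.Ext.{w} X Y n where
  toFun f := P.extMk f.1 (n + 1) rfl f.2
  map_add' _ _ := (P.add_extMk _ _ _ _ _ _).symm
  map_smul' _ _ := (smul_extMk P _ _ _ _ _).symm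

lemma homCocyclesToExt_surjective (n : ℕ) :
    Function.Surjective (homCocyclesToExt.{t, w} A Y P n) := fun x ↦ by
  obtain ⟨f, hf, rfl⟩ := P.extMk_surjective x (n + 1) rfl
  exact ⟨⟨f, hf⟩, rfl⟩

variable (A Y) in
/-- The map sending a cycle of the cochain complex `Hom(P, Y)` to its class in `Ext X Y n`. -/
def cyclesToExt (n : ℕ) :
    (P.complex.linearYonedaObj A Y).cycles n →ₗ[A] Abelian.Ext.{w} X Y n :=
  homCocyclesToExt A Y P n ∘ₗ cyclesToHomCocycles A Y P n

lemma cyclesToExt_surjective (n : ℕ) : Function.Surjective (cyclesToExt.{t, w} A Y P n) :=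
  (homCocyclesToExt_surjective P n).comp (cyclesToHomCocycles_surjective P n)

lemma cyclesToExt_eq_zero_iff {n : ℕ} (z : (P.complex.linearYonedaObj A Y).cycles n) :
    cyclesToExt.{t, w} A Y P n z = 0 ↔ (P.complex.linearYonedaObj A Y).homologyπ n z = 0 :=
  (extMk_eq_zero_iff_exists_prev P _ (cyclesToHomCocycles A Y P n z).2).trans
    (homologyπ_eq_zero_iff _ z).symm

variable (A Y) in
/-- The comparison between `Ext` groups defined by a projective resolution and by the derived
category. -/
def homologyEquivExt (n : ℕ) :
    (P.complex.linearYonedaObj A Y).homology n ≃ₗ[A] Abelian.Ext.{w} X Y n :=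
  have hπ := (ModuleCat.epi_iff_surjective
    ((P.complex.linearYonedaObj A Y).homologyπ n)).1 inferInstance
  (LinearMap.quotKerEquivOfSurjective _ hπ).symm ≪≫ₗ
    Submodule.quotEquivOfEq _ _ (by ext z; exact (cyclesToExt_eq_zero_iff P z).symm) ≪≫ₗ
    LinearMap.quotKerEquivOfSurjective _ (cyclesToExt_surjective P n)

lemma homologyEquivExt_homologyπ {n : ℕ} (z : (P.complex.linearYonedaObj A Y).cycles n) :
    homologyEquivExt A Y P n ((P.complex.linearYonedaObj A Y).homologyπ n z) =
      cyclesToExt.{t, w} A Y P n z := by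
  simp only [homologyEquivExt, LinearEquiv.trans_apply]
  rw [LinearMap.quotKerEquivOfSurjective_symm_apply, Submodule.quotEquivOfEq_mk,
    LinearMap.quotKerEquivOfSurjective_apply_mk]

variable {P} {P' : ProjectiveResolution X'} {g : X' ⟶ X} (φ : P'.Hom P g)

lemma cyclesToExt_cyclesMap {n : ℕ} (z : (P.complex.linearYonedaObj A Y).cycles n) :
    cyclesToExt A Y P' n (HomologicalComplex.cyclesMap (linearYonedaMap A Y φ) n z) =
      (Abelian.Ext.mk₀ g).comp (cyclesToExt A Y P n z) (zero_add n) := by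
  have hz : cyclesToHomCocycles A Y P' n
        (HomologicalComplex.cyclesMap (linearYonedaMap A Y φ) n z) =
      ⟨φ.hom.f n ≫ (cyclesToHomCocycles A Y P n z).1, by
        simp [← φ.hom.comm_assoc, show P.complex.d (n + 1) n ≫ _ = 0 from
          (cyclesToHomCocycles A Y P n z).2]⟩ :=
    Subtype.ext congr($(HomologicalComplex.cyclesMap_i (linearYonedaMap A Y φ) n) z)
  exact (congrArg (homCocyclesToExt A Y P' n) hz).trans
    (ProjectiveResolution.mk₀_comp_extMk _ _ rfl (cyclesToHomCocycles A Y P n z).2 φ).symm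

lemma homologyEquivExt_homologyMap {n : ℕ} (y : (P.complex.linearYonedaObj A Y).homology n) :
    homologyEquivExt A Y P' n (HomologicalComplex.homologyMap (linearYonedaMap A Y φ) n y) =
      (Abelian.Ext.mk₀ g).comp (homologyEquivExt A Y P n y) (zero_add n) := by
  obtain ⟨z, rfl⟩ := (ModuleCat.epi_iff_surjective
    ((P.complex.linearYonedaObj A Y).homologyπ n)).1 inferInstance y
  rw [homologyEquivExt_homologyπ, ← cyclesToExt_cyclesMap φ, ← homologyEquivExt_homologyπ]
  congr 1
  exact congr($(HomologicalComplex.homologyπ_naturality (linearYonedaMap A Y φ) n) z)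

variable [EnoughProjectives C]

variable (A X Y) in
/-- The comparison between `Ext` as a left derived functor and `Ext` as a group of morphisms in the
derived category. -/
def extEquivAbelianExt (n : ℕ) :
    ((Ext A C n).obj (Opposite.op X)).obj Y ≃ₗ[A] Abelian.Ext.{w} X Y n :=
  ((projectiveResolution X).isoExt n Y).toLinearEquiv ≪≫ₗ
    homologyEquivExt A Y (projectiveResolution X) n

lemma extEquivAbelianExt_naturality (g : X' ⟶ X) {n : ℕ}
    (x : ((Ext A C n).obj (Opposite.op X)).obj Y) :
    extEquivAbelianExt A X' Y n (((Ext A C n).map g.op).app Y x) =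
      (Abelian.Ext.mk₀ g).comp (extEquivAbelianExt A X Y n x) (zero_add n) := by
  let φ : (projectiveResolution X').Hom (projectiveResolution X) g :=
    { hom := ProjectiveResolution.lift g _ _
      hom_f_zero_comp_π_f_zero :=
        congr(HomologicalComplex.Hom.f $(ProjectiveResolution.lift_commutes g _ _) 0) }
  refine Eq.trans ?_ (homologyEquivExt_homologyMap φ _)
  exact congr(homologyEquivExt A Y (projectiveResolution X') n ($(isoExt_hom_naturality φ n) x))

end ExtComparison

section LocalCohomology

variable {A : Type u} [CommRing A] (J : Ideal A) (i : ℕ)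

/-- The projection `A ⧸ J ^ n ⟶ A ⧸ J ^ m`, as a morphism in `ModuleCat`. -/
def quotPowMap {m n : ℕ} (h : m ≤ n) :
    ModuleCat.of A (A ⧸ J ^ n) ⟶ ModuleCat.of A (A ⧸ J ^ m) :=
  ModuleCat.ofHom (Submodule.factor (Ideal.pow_le_pow_right h))

lemma quotPowMap_refl (n : ℕ) : quotPowMap J (le_refl n) = 𝟙 _ := by
  ext; rfl

lemma quotPowMap_comp {l m n : ℕ} (h : l ≤ m) (h' : m ≤ n) :
    quotPowMap J h' ≫ quotPowMap J h = quotPowMap J (h.trans h') := by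
  ext; rfl

variable (N : Type u) [AddCommGroup N] [Module A N]

/-- The `n`-th term `Ext^i(A ⧸ J ^ n, N)` of the direct system defining local cohomology. -/
abbrev ExtQuotPow (n : ℕ) : Type u :=
  Abelian.Ext.{u} (ModuleCat.of A (A ⧸ J ^ n)) (ModuleCat.of A N) i

/-- The transition maps of the direct system defining local cohomology. -/
def extQuotPowMap (m n : ℕ) (h : m ≤ n) : ExtQuotPow J i N m →ₗ[A] ExtQuotPow J i N n :=
  (Abelian.Ext.mk₀ (quotPowMap J h)).precompOfLinear A (ModuleCat.of A N) (zero_add i)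

lemma extQuotPowMap_apply {m n : ℕ} (h : m ≤ n) (x : ExtQuotPow J i N m) :
    extQuotPowMap J i N m n h x = (Abelian.Ext.mk₀ (quotPowMap J h)).comp x (zero_add i) := rfl

instance : DirectedSystem (ExtQuotPow J i N) (extQuotPowMap J i N · · ·) where
  map_self n x := by rw [extQuotPowMap_apply, quotPowMap_refl, Abelian.Ext.mk₀_id_comp]
  map_map l m n hlm hmn x := by
    simp only [extQuotPowMap_apply, Abelian.Ext.mk₀_comp_mk₀_assoc, quotPowMap_comp]

/-- The local cohomology module `H^i_J(N)`, as the direct limit of the modules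
`Ext^i(A ⧸ J ^ n, N)`. -/
abbrev LocCohom : Type u := Module.DirectLimit (ExtQuotPow J i N) (extQuotPowMap J i N)

/-- The structure map from the `n`-th term of the direct system to `LocCohom`. -/
abbrev LocCohom.of (n : ℕ) : ExtQuotPow J i N n →ₗ[A] LocCohom J i N :=
  Module.DirectLimit.of A ℕ _ (extQuotPowMap J i N) n

/-- The direct system defining `LocCohom`, as a functor. -/
@[simps]
def extQuotPowFunctor : ℕ ⥤ ModuleCat.{u} A where
  obj n := ModuleCat.of A (ExtQuotPow J i N n)
  map f := ModuleCat.ofHom (extQuotPowMap J i N _ _ f.le)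
  map_id n := by
    ext x
    exact DirectedSystem.map_self (f := (extQuotPowMap J i N · · ·)) x
  map_comp f g := by
    ext x
    exact (DirectedSystem.map_map (f := (extQuotPowMap J i N · · ·)) f.le g.le x).symm

/-- `LocCohom` as a cocone over `extQuotPowFunctor`. -/
@[simps]
def locCohomCocone : Limits.Cocone (extQuotPowFunctor J i N) where
  pt := ModuleCat.of A (LocCohom J i N)
  ι :=
    { app := fun n ↦ ModuleCat.ofHom (LocCohom.of J i N n)
      naturality := fun _ _ f ↦ by
        ext x
        exact Module.DirectLimit.of_f (hij := f.le) }

variable {J i N} in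
/-- The morphism from `LocCohom` to the point of a cocone over `extQuotPowFunctor`. -/
def locCohomDesc (s : Limits.Cocone (extQuotPowFunctor J i N)) : LocCohom J i N →ₗ[A] s.pt :=
  Module.DirectLimit.lift A ℕ (ExtQuotPow J i N) (extQuotPowMap J i N)
    (fun n ↦ (s.ι.app n).hom) fun _ _ h x ↦ congr($(s.w (homOfLE h)) x)

lemma locCohomDesc_of (s : Limits.Cocone (extQuotPowFunctor J i N)) {n : ℕ}
    (x : ExtQuotPow J i N n) :
    locCohomDesc s (LocCohom.of J i N n x) = s.ι.app n x :=
  Module.DirectLimit.lift_of _ _ x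

/-- `LocCohom` is the colimit of `extQuotPowFunctor`. -/
def locCohomIsColimit : Limits.IsColimit (locCohomCocone J i N) where
  desc s := ModuleCat.ofHom (locCohomDesc s)
  fac s n := by
    ext x
    exact locCohomDesc_of J i N s x
  uniq s f hf := by
    ext x
    refine Module.DirectLimit.induction_on x fun n y ↦ ?_
    exact congr($(hf n) y).trans (locCohomDesc_of J i N s y).symm

/-- The comparison of the direct systems defining `localCohomology` and `LocCohom`. -/
def diagramEvaluationIso :
    localCohomology.diagram (localCohomology.idealPowersDiagram J) i ⋙
        (evaluation _ _).obj (ModuleCat.of A N) ≅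
      (opOpEquivalence ℕ).functor ⋙ extQuotPowFunctor J i N :=
  NatIso.ofComponents (fun n ↦ (extEquivAbelianExt A _ _ i).toModuleIso) fun f ↦ by
    ext x
    exact extEquivAbelianExt_naturality _ x

/-- `LocCohom` computes Mathlib's `localCohomology`. -/
def localCohomologyEquiv :
    (localCohomology J i).obj (ModuleCat.of A N) ≃ₗ[A] LocCohom J i N :=
  (Limits.colimitObjIsoColimitCompEvaluation _ _ ≪≫
    Limits.HasColimit.isoOfNatIso (diagramEvaluationIso J i N) ≪≫ Functor.Final.colimitIso _ _ ≪≫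
    (Limits.colimit.isColimit _).coconePointUniqueUpToIso
      (locCohomIsColimit J i N)).toLinearEquiv

end LocalCohomology

section Functoriality

lemma exact_directLimitMap {S ι : Type*} [Semiring S] [Preorder ι] [DecidableEq ι] [Nonempty ι]
    [IsDirectedOrder ι] {G G' G'' : ι → Type*}
    [∀ i, AddCommMonoid (G i)] [∀ i, Module S (G i)] {f : ∀ i j, i ≤ j → G i →ₗ[S] G j}
    [∀ i, AddCommMonoid (G' i)] [∀ i, Module S (G' i)] {f' : ∀ i j, i ≤ j → G' i →ₗ[S] G' j}
    [∀ i, AddCommMonoid (G'' i)] [∀ i, Module S (G'' i)] {f'' : ∀ i j, i ≤ j → G'' i →ₗ[S] G'' j}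
    [DirectedSystem G'' (f'' · · ·)] {α : ∀ i, G i →ₗ[S] G' i} {β : ∀ i, G' i →ₗ[S] G'' i}
    (hα : ∀ i j h, α j ∘ₗ f i j h = f' i j h ∘ₗ α i)
    (hβ : ∀ i j h, β j ∘ₗ f' i j h = f'' i j h ∘ₗ β i)
    (h : ∀ i, Function.Exact (α i) (β i)) :
    Function.Exact (Module.DirectLimit.map α hα) (Module.DirectLimit.map β hβ) := by
  refine LinearMap.exact_of_comp_of_mem_range ?_ fun x hx ↦ ?_
  · ext i x
    simp [(h i).apply_apply_eq_zero]
  · obtain ⟨i, y, rfl⟩ := Module.DirectLimit.exists_of x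
    rw [Module.DirectLimit.map_apply_of] at hx
    obtain ⟨j, hij, hj⟩ := Module.DirectLimit.of.zero_exact hx
    rw [← LinearMap.comp_apply, ← hβ, LinearMap.comp_apply] at hj
    obtain ⟨z, hz⟩ := (h j _).1 hj
    exact ⟨Module.DirectLimit.of _ _ _ _ j z, by simp [hz]⟩

section Ext

universe t w v u'

variable {A : Type t} [CommRing A] {C : Type u'} [Category.{v} C] [Abelian C] [HasExt.{w} C]
  [Linear A C] {S : ShortComplex C} (hS : S.ShortExact) (X : C) (n : ℕ)

include hS

variable (A) in
lemma exact_postcomp_f_postcomp_g :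
    Function.Exact ((Abelian.Ext.mk₀ S.f).postcompOfLinear A X (add_zero n))
      ((Abelian.Ext.mk₀ S.g).postcompOfLinear A X (add_zero n)) := fun x ↦ by
  refine ⟨Abelian.Ext.covariant_sequence_exact₂ X hS x, ?_⟩
  rintro ⟨y, rfl⟩
  simp [Abelian.Ext.mk₀_comp_mk₀]

variable (A) in
lemma exact_postcomp_g_postcomp_extClass :
    Function.Exact ((Abelian.Ext.mk₀ S.g).postcompOfLinear A X (add_zero n))
      (hS.extClass.postcompOfLinear A X (rfl : n + 1 = n + 1)) := fun x ↦ by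
  refine ⟨Abelian.Ext.covariant_sequence_exact₃ X hS x rfl, ?_⟩
  rintro ⟨y, rfl⟩
  simp [Abelian.Ext.comp_assoc_of_second_deg_zero]

variable (A) in
lemma exact_postcomp_extClass_postcomp_f :
    Function.Exact (hS.extClass.postcompOfLinear A X (rfl : n + 1 = n + 1))
      ((Abelian.Ext.mk₀ S.f).postcompOfLinear A X (add_zero (n + 1))) := fun x ↦ by
  refine ⟨fun hx ↦ Abelian.Ext.covariant_sequence_exact₁ X hS x hx rfl, ?_⟩
  rintro ⟨y, rfl⟩
  simp

end Ext

variable {A : Type u} [CommRing A] (J : Ideal A) (i : ℕ)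
variable {L N Q : Type u} [AddCommGroup L] [Module A L] [AddCommGroup N] [Module A N]
  [AddCommGroup Q] [Module A Q]

lemma postcompOfLinear_comp_extQuotPowMap {j k : ℕ}
    (α : Abelian.Ext.{u} (ModuleCat.of A N) (ModuleCat.of A Q) k) (h : i + k = j) (m n : ℕ)
    (hmn : m ≤ n) :
    α.postcompOfLinear A _ h ∘ₗ extQuotPowMap J i N m n hmn =
      extQuotPowMap J j Q m n hmn ∘ₗ α.postcompOfLinear A _ h := by
  ext x
  exact Abelian.Ext.comp_assoc _ _ _ (zero_add i) h (by lia)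

namespace LocCohom

/-- The map `H^i_J(N) → H^{i + k}_J(Q)` given by Yoneda composition with a class in
`Ext^k(N, Q)`. -/
def postcomp {j k : ℕ} (α : Abelian.Ext.{u} (ModuleCat.of A N) (ModuleCat.of A Q) k)
    (h : i + k = j) : LocCohom J i N →ₗ[A] LocCohom J j Q :=
  Module.DirectLimit.map (fun _ ↦ α.postcompOfLinear A _ h)
    (postcompOfLinear_comp_extQuotPowMap J i α h)

variable {J i} in
lemma exact_postcomp_postcomp {j k l m : ℕ}
    {α : Abelian.Ext.{u} (ModuleCat.of A L) (ModuleCat.of A N) k} (hj : i + k = j)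
    {β : Abelian.Ext.{u} (ModuleCat.of A N) (ModuleCat.of A Q) l} (hm : j + l = m)
    (h : ∀ X : ModuleCat.{u} A,
      Function.Exact (α.postcompOfLinear A X hj) (β.postcompOfLinear A X hm)) :
    Function.Exact (postcomp J i α hj) (postcomp J j β hm) :=
  exact_directLimitMap (postcompOfLinear_comp_extQuotPowMap J i α hj)
    (postcompOfLinear_comp_extQuotPowMap J j β hm) fun _ ↦ h _

/-- The map `H^i_J(N) → H^i_J(Q)` induced by a linear map. -/
def map (f : N →ₗ[A] Q) : LocCohom J i N →ₗ[A] LocCohom J i Q :=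
  postcomp J i (Abelian.Ext.mk₀ (ModuleCat.ofHom f)) (add_zero i)

lemma map_of (f : N →ₗ[A] Q) {n : ℕ} (x : ExtQuotPow J i N n) :
    map J i f (of J i N n x) =
      of J i Q n (x.comp (Abelian.Ext.mk₀ (ModuleCat.ofHom f)) (add_zero i)) :=
  Module.DirectLimit.map_apply_of _ (postcompOfLinear_comp_extQuotPowMap J i _ _) x

lemma map_id : map J i (LinearMap.id : N →ₗ[A] N) = LinearMap.id := by
  ext n x
  exact (map_of J i _ x).trans (congrArg _ (Abelian.Ext.comp_mk₀_id x))

lemma map_comp (f : L →ₗ[A] N) (g : N →ₗ[A] Q) :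
    map J i (g ∘ₗ f) = map J i g ∘ₗ map J i f := by
  ext n x
  simp only [LinearMap.comp_apply, map_of, ModuleCat.ofHom_comp, ← Abelian.Ext.mk₀_comp_mk₀,
    Abelian.Ext.comp_assoc_of_third_deg_zero]

lemma map_smul (r : A) (f : N →ₗ[A] Q) : map J i (r • f) = r • map J i f := by
  ext n x
  have hr : ModuleCat.ofHom (r • f) = r • ModuleCat.ofHom f := rfl
  simp only [LinearMap.comp_apply, LinearMap.smul_apply, map_of, hr, Abelian.Ext.mk₀_smul,
    Abelian.Ext.comp_smul, _root_.map_smul]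

lemma map_lsmul (r : A) :
    map J i (LinearMap.lsmul A N r) = LinearMap.lsmul A (LocCohom J i N) r :=
  (map_smul J i r LinearMap.id).trans (congrArg (r • ·) (map_id J i))

/-- The isomorphism on local cohomology induced by a linear equivalence. -/
def congr (e : N ≃ₗ[A] Q) : LocCohom J i N ≃ₗ[A] LocCohom J i Q :=
  LinearEquiv.ofLinearMap (map J i e) (map J i e.symm)
    (by simp [← map_comp, map_id]) (by simp [← map_comp, map_id])

section LongExactSequence

variable {J i} {f : L →ₗ[A] N} {g : N →ₗ[A] Q}
variable (hf : Function.Injective f) (hg : Function.Surjective g) (hfg : Function.Exact f g)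

include hf hg hfg

lemma shortExact_moduleCat :
    (ModuleCat.shortComplexOfCompEqZero f g hfg.linearMap_comp_eq_zero).ShortExact :=
  ModuleCat.shortComplex_shortExact _ hfg hf hg

variable (J i) in
/-- The connecting homomorphism of the long exact sequence of local cohomology. -/
def connecting : LocCohom J i Q →ₗ[A] LocCohom J (i + 1) L :=
  postcomp J i (shortExact_moduleCat hf hg hfg).extClass rfl

variable (J i) in
lemma exact_map_map : Function.Exact (map J i f) (map J i g) :=
  exact_postcomp_postcomp _ _ fun X ↦
    exact_postcomp_f_postcomp_g A (shortExact_moduleCat hf hg hfg) X i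

variable (J i) in
lemma exact_map_connecting : Function.Exact (map J i g) (connecting J i hf hg hfg) :=
  exact_postcomp_postcomp _ _ fun X ↦
    exact_postcomp_g_postcomp_extClass A (shortExact_moduleCat hf hg hfg) X i

variable (J i) in
lemma exact_connecting_map : Function.Exact (connecting J i hf hg hfg) (map J (i + 1) f) :=
  exact_postcomp_postcomp _ _ fun X ↦
    exact_postcomp_extClass_postcomp_f A (shortExact_moduleCat hf hg hfg) X i

end LongExactSequence

end LocCohom

end Functoriality

section Torsion

variable {A : Type u} [CommRing A] {J : Ideal A}
variable {N Q : Type u} [AddCommGroup N] [Module A N] [AddCommGroup Q] [Module A Q]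

variable (J N) in
/-- The `J`-torsion submodule `Γ_J(N)` of the elements of `N` killed by some power of `J`. The
module `N` is `J`-torsion when this is `⊤`. -/
def idealTorsion : Submodule A N :=
  ⨆ n : ℕ, Submodule.torsionBySet A N ((J ^ n : Ideal A) : Set A)

lemma monotone_torsionBySet_pow :
    Monotone fun n : ℕ ↦ Submodule.torsionBySet A N ((J ^ n : Ideal A) : Set A) :=
  fun _ _ h ↦ Submodule.torsionBySet_le_torsionBySet_of_subset (Ideal.pow_le_pow_right h)

lemma mem_idealTorsion {m : N} : m ∈ idealTorsion J N ↔ ∃ n, ∀ r ∈ J ^ n, r • m = 0 := by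
  simp [idealTorsion, Submodule.mem_iSup_of_directed _ monotone_torsionBySet_pow.directed_le]

lemma map_mem_idealTorsion (f : N →ₗ[A] Q) {m : N} (hm : m ∈ idealTorsion J N) :
    f m ∈ idealTorsion J Q := by
  obtain ⟨n, hn⟩ := mem_idealTorsion.1 hm
  exact mem_idealTorsion.2 ⟨n, fun r hr ↦ by rw [← map_smul, hn r hr, map_zero]⟩

lemma map_mem_idealTorsion_iff {f : N →ₗ[A] Q} (hf : Function.Injective f) {m : N} :
    f m ∈ idealTorsion J Q ↔ m ∈ idealTorsion J N := by
  simp only [mem_idealTorsion, ← map_smul, map_eq_zero_iff f hf]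

lemma idealTorsion_antitone : Antitone fun J : Ideal A ↦ idealTorsion J N := fun J K h m hm ↦ by
  obtain ⟨n, hn⟩ := mem_idealTorsion.1 hm
  exact mem_idealTorsion.2 ⟨n, fun r hr ↦ hn r (Ideal.pow_right_mono h n hr)⟩

lemma idealTorsion_idealTorsion : idealTorsion J (idealTorsion J N) = ⊤ :=
  Submodule.eq_top_iff'.2 fun m ↦
    (map_mem_idealTorsion_iff (idealTorsion J N).injective_subtype).1 m.2

lemma idealTorsion_eq_top_of_surjective {f : N →ₗ[A] Q} (hf : Function.Surjective f)
    (hN : idealTorsion J N = ⊤) : idealTorsion J Q = ⊤ := by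
  refine Submodule.eq_top_iff'.2 fun q ↦ ?_
  obtain ⟨n, rfl⟩ := hf q
  exact map_mem_idealTorsion f (hN ▸ Submodule.mem_top)

lemma idealTorsion_eq_top_of_injective {f : N →ₗ[A] Q} (hf : Function.Injective f)
    (hQ : idealTorsion J Q = ⊤) : idealTorsion J N = ⊤ :=
  Submodule.eq_top_iff'.2 fun _ ↦ (map_mem_idealTorsion_iff hf).1 (hQ ▸ Submodule.mem_top)

lemma idealTorsion_quotient_smul_top : idealTorsion J (N ⧸ (J • ⊤ : Submodule A N)) = ⊤ := by
  refine Submodule.eq_top_iff'.2 fun y ↦ mem_idealTorsion.2 ⟨1, fun r hr ↦ ?_⟩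
  obtain ⟨n, rfl⟩ := Submodule.mkQ_surjective _ y
  rw [pow_one] at hr
  exact (Submodule.Quotient.mk_eq_zero _).2 (Submodule.smul_mem_smul hr Submodule.mem_top)

lemma mem_idealTorsion_iff_le_radical [IsNoetherianRing A] {m : N} :
    m ∈ idealTorsion J N ↔ J ≤ (Ideal.torsionOf A N m).radical := by
  rw [mem_idealTorsion]
  exact ⟨fun ⟨n, hn⟩ r hr ↦ ⟨n, hn _ (Ideal.pow_mem_pow hr n)⟩, fun h ↦
    Ideal.exists_pow_le_of_le_radical_of_fg h (IsNoetherian.noetherian J)⟩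

end Torsion

namespace LocCohom

variable {A : Type u} [CommRing A] {J : Ideal A} {i : ℕ}
variable {L N Q : Type u} [AddCommGroup L] [Module A L] [AddCommGroup N] [Module A N]
  [AddCommGroup Q] [Module A Q]

section Vanishing

variable {f : L →ₗ[A] N} {g : N →ₗ[A] Q}
variable (hf : Function.Injective f) (hg : Function.Surjective g) (hfg : Function.Exact f g)

include hf hg hfg

lemma map_surjective_of_right (hQ : Subsingleton (LocCohom J i Q)) :
    Function.Surjective (map J i f) :=
  fun x ↦ (exact_map_map J i hf hg hfg x).1 (hQ.elim _ _)

lemma map_surjective_of_left (hL : Subsingleton (LocCohom J (i + 1) L)) :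
    Function.Surjective (map J i g) :=
  fun x ↦ (exact_map_connecting J i hf hg hfg x).1 (hL.elim _ _)

lemma map_injective_of_right (hQ : Subsingleton (LocCohom J i Q)) :
    Function.Injective (map J (i + 1) f) := by
  refine (injective_iff_map_eq_zero _).2 fun x hx ↦ ?_
  obtain ⟨y, rfl⟩ := (exact_connecting_map J i hf hg hfg x).1 hx
  rw [hQ.elim y 0, map_zero]

lemma connecting_injective (hN : Subsingleton (LocCohom J i N)) :
    Function.Injective (connecting J i hf hg hfg) := by
  refine (injective_iff_map_eq_zero _).2 fun x hx ↦ ?_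
  obtain ⟨y, rfl⟩ := (exact_map_connecting J i hf hg hfg x).1 hx
  rw [hN.elim y 0, map_zero]

lemma connecting_surjective (hN : Subsingleton (LocCohom J (i + 1) N)) :
    Function.Surjective (connecting J i hf hg hfg) :=
  fun x ↦ (exact_connecting_map J i hf hg hfg x).1 (hN.elim _ _)

lemma subsingleton_left (hQ : Subsingleton (LocCohom J i Q))
    (hN : Subsingleton (LocCohom J (i + 1) N)) : Subsingleton (LocCohom J (i + 1) L) :=
  ⟨fun _ _ ↦ map_injective_of_right hf hg hfg hQ (hN.elim _ _)⟩

lemma subsingleton_right (hN : Subsingleton (LocCohom J i N))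
    (hL : Subsingleton (LocCohom J (i + 1) L)) : Subsingleton (LocCohom J i Q) :=
  ⟨(map_surjective_of_left hf hg hfg hL).forall₂.2 fun x y ↦ congrArg _ (hN.elim x y)⟩

/-- The connecting homomorphism is an isomorphism `H^i_J(Q) ≃ H^{i + 1}_J(L)` when the middle
module `N` is acyclic in both degrees. -/
def connectingEquiv (hN : Subsingleton (LocCohom J i N))
    (hN' : Subsingleton (LocCohom J (i + 1) N)) : LocCohom J i Q ≃ₗ[A] LocCohom J (i + 1) L :=
  LinearEquiv.ofBijective (connecting J i hf hg hfg)
    ⟨connecting_injective hf hg hfg hN, connecting_surjective hf hg hfg hN'⟩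

end Vanishing

lemma exists_pow_smul_eq_zero (x : LocCohom J i N) : ∃ n, ∀ r ∈ J ^ n, r • x = 0 := by
  obtain ⟨n, x, rfl⟩ := Module.DirectLimit.exists_of x
  refine ⟨n, fun r hr ↦ ?_⟩
  have hid : r • 𝟙 (ModuleCat.of A (A ⧸ J ^ n)) = 0 := by
    ext
    exact Ideal.Quotient.eq_zero_iff_mem.2 (by simpa using hr)
  have hx : r • x = 0 := by
    rw [← Abelian.Ext.mk₀_id_comp x, ← Abelian.Ext.smul_comp, ← Abelian.Ext.mk₀_smul, hid,
      Abelian.Ext.mk₀_zero, Abelian.Ext.zero_comp]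
  rw [← _root_.map_smul, hx, map_zero]

lemma subsingleton_of_smul_injective {x : A} (hx : x ∈ J)
    (hinj : Function.Injective fun y : LocCohom J i N ↦ x • y) :
    Subsingleton (LocCohom J i N) := by
  refine subsingleton_of_forall_eq 0 fun y ↦ ?_
  obtain ⟨n, hn⟩ := exists_pow_smul_eq_zero y
  exact (IsSMulRegular.pow n hinj).right_eq_zero_of_smul (hn _ (Ideal.pow_mem_pow hx n))

lemma subsingleton_of_injective (E : Type u) [AddCommGroup E] [Module A E] [Module.Injective A E]
    (hi : 0 < i) : Subsingleton (LocCohom J i E) := by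
  have : Injective (ModuleCat.of A E) :=
    (Module.injective_iff_injective_object A E).1 inferInstance
  obtain ⟨i, rfl⟩ := Nat.exists_eq_succ_of_ne_zero hi.ne'
  refine subsingleton_of_forall_eq 0 fun x ↦ ?_
  obtain ⟨n, x, rfl⟩ := Module.DirectLimit.exists_of x
  rw [Abelian.Ext.eq_zero_of_injective x, map_zero]

section DegreeZero

variable (J N) in
/-- Evaluation at `1`, as a map from `Ext^0(A ⧸ J ^ n, N) = Hom(A ⧸ J ^ n, N)` to `N`. -/
def extEvalOne (n : ℕ) : ExtQuotPow J 0 N n →ₗ[A] N :=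
  LinearMap.applyₗ (1 : A ⧸ J ^ n) ∘ₗ (ModuleCat.homLinearEquiv (S := A)).toLinearMap ∘ₗ
    Abelian.Ext.linearEquiv₀.toLinearMap

lemma extEvalOne_mk₀ {n : ℕ} (φ : ModuleCat.of A (A ⧸ J ^ n) ⟶ ModuleCat.of A N) :
    extEvalOne J N n (Abelian.Ext.mk₀ φ) = φ.hom (1 : A ⧸ J ^ n) :=
  congr(ModuleCat.Hom.hom $(Abelian.Ext.linearEquiv₀ (R := A).apply_symm_apply φ) 1)

lemma extEvalOne_injective (n : ℕ) : Function.Injective (extEvalOne J N n) := by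
  refine (injective_iff_map_eq_zero _).2 fun x hx ↦ ?_
  obtain ⟨φ, rfl⟩ := Abelian.Ext.linearEquiv₀ (R := A).symm.surjective x
  have hφ : φ = 0 := by
    ext
    exact (extEvalOne_mk₀ φ).symm.trans hx
  rw [hφ, map_zero]

variable (J N) in
/-- Evaluation at `1`, as a map from `H^0_J(N)` to `N`. -/
def evalOne : LocCohom J 0 N →ₗ[A] N :=
  Module.DirectLimit.lift A ℕ _ _ (extEvalOne J N) fun m n h x ↦ by
    obtain ⟨φ, rfl⟩ := Abelian.Ext.linearEquiv₀ (R := A).symm.surjective x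
    exact (congrArg _ (Abelian.Ext.mk₀_comp_mk₀ _ _)).trans <|
      (extEvalOne_mk₀ _).trans (extEvalOne_mk₀ φ).symm

lemma evalOne_of {n : ℕ} (x : ExtQuotPow J 0 N n) :
    evalOne J N (of J 0 N n x) = extEvalOne J N n x :=
  Module.DirectLimit.lift_of _ _ x

lemma evalOne_injective : Function.Injective (evalOne J N) :=
  Module.DirectLimit.lift_injective _ _ extEvalOne_injective

lemma evalOne_map (f : N →ₗ[A] Q) (x : LocCohom J 0 N) :
    evalOne J Q (map J 0 f x) = f (evalOne J N x) := by
  obtain ⟨n, x, rfl⟩ := Module.DirectLimit.exists_of x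
  obtain ⟨φ, rfl⟩ := Abelian.Ext.linearEquiv₀ (R := A).symm.surjective x
  rw [Abelian.Ext.linearEquiv₀_symm_apply, map_of, evalOne_of, evalOne_of,
    Abelian.Ext.mk₀_comp_mk₀, extEvalOne_mk₀, extEvalOne_mk₀]
  rfl

lemma range_evalOne : LinearMap.range (evalOne J N) = idealTorsion J N := by
  refine le_antisymm ?_ fun m hm ↦ ?_
  · rintro _ ⟨x, rfl⟩
    exact map_mem_idealTorsion _ (mem_idealTorsion.2 (exists_pow_smul_eq_zero x))
  · obtain ⟨n, hn⟩ := mem_idealTorsion.1 hm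
    let φ : (A ⧸ J ^ n) →ₗ[A] N := Submodule.liftQ _ (LinearMap.toSpanSingleton A N m) hn
    refine ⟨of J 0 N n (Abelian.Ext.mk₀ (ModuleCat.ofHom φ)), ?_⟩
    rw [evalOne_of, extEvalOne_mk₀]
    exact one_smul A m

variable (J N) in
/-- The identification of `H^0_J(N)` with the `J`-torsion of `N`. -/
def zeroEquiv : LocCohom J 0 N ≃ₗ[A] idealTorsion J N :=
  LinearEquiv.ofInjective (evalOne J N) evalOne_injective ≪≫ₗ
    LinearEquiv.ofEq _ _ range_evalOne

lemma subsingleton_zero_iff : Subsingleton (LocCohom J 0 N) ↔ idealTorsion J N = ⊥ :=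
  (zeroEquiv J N).toEquiv.subsingleton_congr.trans Submodule.subsingleton_iff_eq_bot

lemma subsingleton_zero_of_le {K : Ideal A} (h : J ≤ K) (hJ : Subsingleton (LocCohom J 0 N)) :
    Subsingleton (LocCohom K 0 N) :=
  subsingleton_zero_iff.2 (le_bot_iff.1 (subsingleton_zero_iff.1 hJ ▸ idealTorsion_antitone h))

lemma map_zero_injective {f : N →ₗ[A] Q} (hf : Function.Injective f) :
    Function.Injective (map J 0 f) := by
  refine Function.Injective.of_comp (f := evalOne J Q) ?_
  rw [show evalOne J Q ∘ map J 0 f = f ∘ evalOne J N from funext (evalOne_map f)]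
  exact hf.comp evalOne_injective

lemma map_zero_surjective_of_idealTorsion_eq_top {f : N →ₗ[A] Q} (hf : Function.Surjective f)
    (hN : idealTorsion J N = ⊤) : Function.Surjective (map J 0 f) := fun y ↦ by
  obtain ⟨n, hn⟩ := hf (evalOne J Q y)
  obtain ⟨x, rfl⟩ : n ∈ LinearMap.range (evalOne J N) := by
    rw [range_evalOne, hN]
    exact Submodule.mem_top
  exact ⟨x, evalOne_injective ((evalOne_map f x).trans hn)⟩

lemma map_subtype_bijective {G : Submodule A N}
    (hG : ∀ i, Subsingleton (LocCohom J i (N ⧸ G))) (i : ℕ) :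
    Function.Bijective (map J i G.subtype) := by
  refine ⟨?_, map_surjective_of_right G.injective_subtype G.mkQ_surjective
    (LinearMap.exact_subtype_mkQ G) (hG i)⟩
  cases i with
  | zero => exact map_zero_injective G.injective_subtype
  | succ i =>
    exact map_injective_of_right G.injective_subtype G.mkQ_surjective
      (LinearMap.exact_subtype_mkQ G) (hG i)

end DegreeZero

end LocCohom

section TorsionNoetherian

variable {A : Type u} [CommRing A] [IsNoetherianRing A] {J : Ideal A}
variable {N : Type u} [AddCommGroup N] [Module A N]

lemma idealTorsion_quotient_idealTorsion : idealTorsion J (N ⧸ idealTorsion J N) = ⊥ := by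
  refine (Submodule.eq_bot_iff _).2 fun q hq ↦ ?_
  obtain ⟨m, rfl⟩ := Submodule.mkQ_surjective _ q
  refine (Submodule.Quotient.mk_eq_zero _).2 (mem_idealTorsion_iff_le_radical.2 fun r hr ↦ ?_)
  obtain ⟨n, hn⟩ := mem_idealTorsion_iff_le_radical.1 hq hr
  have hm : r ^ n • m ∈ idealTorsion J N := (Submodule.Quotient.mk_eq_zero _).1 hn
  obtain ⟨k, hk⟩ := mem_idealTorsion_iff_le_radical.1 hm hr
  refine ⟨k + n, ?_⟩
  rw [Ideal.mem_torsionOf_iff] at hk ⊢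
  rw [pow_add, mul_smul, hk]

lemma exists_pow_le_annihilator [Module.Finite A N] (hN : idealTorsion J N = ⊤) :
    ∃ n, J ^ n ≤ Module.annihilator A N := by
  let f : ℕ →o Submodule A N := ⟨_, monotone_torsionBySet_pow (J := J)⟩
  have hf : f (monotonicSequenceLimitIndex f) = ⊤ :=
    (WellFoundedGT.iSup_eq_monotonicSequenceLimit f).symm.trans hN
  exact ⟨monotonicSequenceLimitIndex f, fun r hr ↦ Module.mem_annihilator.2 fun x ↦
    (Submodule.mem_torsionBySet_iff _ x).1 (hf.ge Submodule.mem_top) ⟨r, hr⟩⟩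

lemma exists_forall_mem_pow_smul_top_apply_eq_zero {P : Type u} [AddCommGroup P] [Module A P]
    [Module.Finite A P] (hN : idealTorsion J N = ⊤) {K : Submodule A P} (g : K →ₗ[A] N) :
    ∃ m, ∀ x : K, (x : P) ∈ J ^ m • (⊤ : Submodule A P) → g x = 0 := by
  have hg : idealTorsion J (LinearMap.range g) = ⊤ :=
    idealTorsion_eq_top_of_injective (LinearMap.range g).injective_subtype hN
  obtain ⟨n, hn⟩ := exists_pow_le_annihilator hg
  obtain ⟨k, hk⟩ := J.exists_pow_inf_eq_pow_smul K
  refine ⟨n + k, fun x hx ↦ ?_⟩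
  have hxn : x ∈ J ^ n • (⊤ : Submodule A K) := by
    rw [Submodule.mem_smul_top_iff]
    have hxK : (x : P) ∈ J ^ (n + k) • ⊤ ⊓ K := ⟨hx, x.2⟩
    rw [hk _ (Nat.le_add_left k n), Nat.add_sub_cancel] at hxK
    exact Submodule.smul_mono le_rfl inf_le_right hxK
  refine (Submodule.smul_le.2 fun r hr y _ ↦ ?_ : J ^ n • ⊤ ≤ LinearMap.ker g) hxn
  rw [LinearMap.mem_ker, map_smul]
  exact congrArg Subtype.val (Module.mem_annihilator.1 (hn hr) ⟨g y, LinearMap.mem_range_self g y⟩)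

end TorsionNoetherian

section Injective

variable {A : Type u} [CommRing A] {J : Ideal A}
variable {N : Type u} [AddCommGroup N] [Module A N]

lemma exists_comp_eq_of_ker_le_ker {P Q E : Type u} [AddCommGroup P] [Module A P]
    [AddCommGroup Q] [Module A Q] [AddCommGroup E] [Module A E] [Module.Injective A E]
    {φ : P →ₗ[A] Q} {g : P →ₗ[A] E} (h : LinearMap.ker φ ≤ LinearMap.ker g) :
    ∃ g' : Q →ₗ[A] E, g' ∘ₗ φ = g := by
  obtain ⟨g', hg'⟩ := Module.Injective.extension_property A E _ _
    ((LinearMap.ker φ).liftQ φ le_rfl)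
    (LinearMap.ker_eq_bot.1 (Submodule.ker_liftQ_eq_bot _ _ _ le_rfl)) ((LinearMap.ker φ).liftQ g h)
  refine ⟨g', ?_⟩
  ext x
  exact congr($hg' (Submodule.Quotient.mk x))

variable (N) in
lemma exists_injective_module : ∃ (E : ModuleCat.{u} A) (f : N →ₗ[A] E),
    Function.Injective f ∧ Module.Injective A E :=
  ⟨Injective.under (ModuleCat.of A N), (Injective.ι (ModuleCat.of A N)).hom,
    (ModuleCat.mono_iff_injective _).1 inferInstance,
    (Module.injective_iff_injective_object A _).2
      (inferInstanceAs (Injective (Injective.under (ModuleCat.of A N))))⟩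

/- By Artin–Rees, a map from an ideal to `Γ_J(E)` factors through the image of the ideal in some
`A ⧸ J ^ m`, and extends from there to a map to `E`, whose values are killed by `J ^ m`. -/
lemma injective_idealTorsion [IsNoetherianRing A] (E : Type u) [AddCommGroup E] [Module A E]
    [Module.Injective A E] : Module.Injective A (idealTorsion J E) := by
  refine Module.Baer.injective fun K g ↦ ?_
  obtain ⟨m, hm⟩ := exists_forall_mem_pow_smul_top_apply_eq_zero idealTorsion_idealTorsion g
  obtain ⟨g', hg'⟩ := exists_comp_eq_of_ker_le_ker (φ := Submodule.mkQ (J ^ m) ∘ₗ K.subtype)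
    (g := (idealTorsion J E).subtype ∘ₗ g) fun x hx ↦ by
      have hxm : (x : A) ∈ J ^ m := (Submodule.Quotient.mk_eq_zero _).1 hx
      rw [LinearMap.mem_ker, LinearMap.comp_apply, hm x (by simpa using hxm), map_zero]
  have hmem (y : A ⧸ J ^ m) : g' y ∈ idealTorsion J E := by
    refine map_mem_idealTorsion g' (mem_idealTorsion.2 ⟨m, fun r hr ↦ ?_⟩)
    obtain ⟨s, rfl⟩ := Submodule.mkQ_surjective _ y
    exact (Submodule.Quotient.mk_eq_zero _).2 (Ideal.mul_mem_right s _ hr)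
  refine ⟨g'.codRestrict _ hmem ∘ₗ Submodule.mkQ (J ^ m), fun x hx ↦ Subtype.ext ?_⟩
  exact congr($hg' ⟨x, hx⟩)

lemma exists_injective_module_of_idealTorsion_eq_top [IsNoetherianRing A]
    (hN : idealTorsion J N = ⊤) : ∃ (E : ModuleCat.{u} A) (f : N →ₗ[A] E),
      Function.Injective f ∧ Module.Injective A E ∧ idealTorsion J E = ⊤ := by
  obtain ⟨E, f, hf, hE⟩ := exists_injective_module (A := A) N
  have hmem (n : N) : f n ∈ idealTorsion J E := map_mem_idealTorsion f (hN ▸ Submodule.mem_top)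
  exact ⟨ModuleCat.of A (idealTorsion J E), f.codRestrict _ hmem,
    (LinearMap.injective_codRestrict_iff _).2 hf, injective_idealTorsion E,
    idealTorsion_idealTorsion⟩

end Injective

namespace LocCohom

variable {A : Type u} [CommRing A] [IsNoetherianRing A] {J : Ideal A}

lemma subsingleton_of_idealTorsion_eq_top {i : ℕ} {N : Type u} [AddCommGroup N] [Module A N]
    (hN : idealTorsion J N = ⊤) (hi : 0 < i) : Subsingleton (LocCohom J i N) := by
  obtain ⟨i, rfl⟩ := Nat.exists_eq_succ_of_ne_zero hi.ne'
  induction i generalizing N with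
  | zero =>
    obtain ⟨E, f, hf, hE, hEJ⟩ := exists_injective_module_of_idealTorsion_eq_top hN
    have hE₁ := subsingleton_of_injective (J := J) E one_pos
    have hs := (LinearMap.range f).mkQ_surjective
    refine subsingleton_of_forall_eq 0 fun x ↦ ?_
    obtain ⟨y, rfl⟩ := (exact_connecting_map J 0 hf hs f.exact_map_mkQ_range x).1
      (Subsingleton.elim _ _)
    exact (exact_map_connecting J 0 hf hs f.exact_map_mkQ_range y).2
      (map_zero_surjective_of_idealTorsion_eq_top hs hEJ y)
  | succ i ih =>
    obtain ⟨E, f, hf, hE, hEJ⟩ := exists_injective_module_of_idealTorsion_eq_top hN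
    have hs := (LinearMap.range f).mkQ_surjective
    exact subsingleton_left hf hs f.exact_map_mkQ_range
      (ih (idealTorsion_eq_top_of_surjective hs hEJ) i.succ_pos)
      (subsingleton_of_injective E (Nat.succ_pos _))

end LocCohom

section Composite

variable {A : Type u} [CommRing A] [IsNoetherianRing A] {J K : Ideal A}

lemma exists_injective_acyclic_of_idealTorsion_eq_bot {N : Type u} [AddCommGroup N] [Module A N]
    (hN : idealTorsion J N = ⊥) : ∃ (E : ModuleCat.{u} A) (f : N →ₗ[A] E),
      Function.Injective f ∧ ∀ K, J ≤ K → ∀ i, Subsingleton (LocCohom K i E) := by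
  obtain ⟨E, f, hf, hE⟩ := exists_injective_module (A := A) N
  have hΓ := injective_idealTorsion (J := J) E
  refine ⟨ModuleCat.of A (E ⧸ idealTorsion J E), (idealTorsion J E).mkQ ∘ₗ f, ?_, fun K hK i ↦ ?_⟩
  · refine (injective_iff_map_eq_zero _).2 fun n hn ↦ ?_
    have hfn : f n ∈ idealTorsion J E := (Submodule.Quotient.mk_eq_zero _).1 hn
    rwa [map_mem_idealTorsion_iff hf, hN, Submodule.mem_bot] at hfn
  · rcases i.eq_zero_or_pos with rfl | hi
    · exact LocCohom.subsingleton_zero_of_le hK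
        (LocCohom.subsingleton_zero_iff.2 idealTorsion_quotient_idealTorsion)
    · exact LocCohom.subsingleton_right (idealTorsion J E).injective_subtype
        (Submodule.mkQ_surjective _) (LinearMap.exact_subtype_mkQ _)
        (LocCohom.subsingleton_of_injective E hi)
        (LocCohom.subsingleton_of_injective (idealTorsion J E) i.succ_pos)

namespace LocCohom

lemma subsingleton_of_forall_le (hJK : J ≤ K) {i : ℕ} {N : Type u} [AddCommGroup N] [Module A N]
    (hN : ∀ j ≤ i, Subsingleton (LocCohom J j N)) : Subsingleton (LocCohom K i N) := by
  induction i generalizing N with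
  | zero => exact subsingleton_zero_of_le hJK (hN 0 le_rfl)
  | succ i ih =>
    obtain ⟨E, f, hf, hE⟩ := exists_injective_acyclic_of_idealTorsion_eq_bot
      (subsingleton_zero_iff.1 (hN 0 (Nat.zero_le _)))
    have hs := (LinearMap.range f).mkQ_surjective
    refine subsingleton_left hf hs f.exact_map_mkQ_range (ih fun j hj ↦ ?_) (hE K hJK _)
    exact subsingleton_right hf hs f.exact_map_mkQ_range (hE J le_rfl j)
      (hN (j + 1) (Nat.succ_le_succ hj))

variable {N : Type u} [AddCommGroup N] [Module A N]

lemma subsingleton_quotient_idealTorsion (hN : ∀ i ≠ 0, Subsingleton (LocCohom J i N)) (i : ℕ) :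
    Subsingleton (LocCohom J i (N ⧸ idealTorsion J N)) := by
  rcases i.eq_zero_or_pos with rfl | hi
  · exact subsingleton_zero_iff.2 idealTorsion_quotient_idealTorsion
  · exact subsingleton_right (idealTorsion J N).injective_subtype (Submodule.mkQ_surjective _)
      (LinearMap.exact_subtype_mkQ _) (hN i hi.ne')
      (subsingleton_of_idealTorsion_eq_top idealTorsion_idealTorsion i.succ_pos)

/-- The degenerate case of the Grothendieck spectral sequence of `Γ_K ∘ Γ_J = Γ_K`. -/
theorem nonempty_linearEquiv_of_forall_ne (hJK : J ≤ K) {t : ℕ}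
    (hN : ∀ i ≠ t, Subsingleton (LocCohom J i N)) (i : ℕ) :
    Nonempty (LocCohom K (i + t) N ≃ₗ[A] LocCohom K i (LocCohom J t N)) := by
  induction t generalizing N with
  | zero =>
    have hQ := fun i ↦ subsingleton_of_forall_le hJK (i := i) fun j _ ↦
      subsingleton_quotient_idealTorsion hN j
    exact ⟨(LinearEquiv.ofBijective _ (map_subtype_bijective hQ i)).symm.trans
      (congr K i (zeroEquiv J N).symm)⟩
  | succ t ih =>
    obtain ⟨E, f, hf, hE⟩ := exists_injective_acyclic_of_idealTorsion_eq_bot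
      (subsingleton_zero_iff.1 (hN 0 t.succ_ne_zero.symm))
    have hs := (LinearMap.range f).mkQ_surjective
    have hfs := f.exact_map_mkQ_range
    obtain ⟨e⟩ := ih fun j hj ↦ subsingleton_right hf hs hfs (hE J le_rfl j)
      (hN (j + 1) (Nat.succ_ne_succ_iff.2 hj))
    exact ⟨(connectingEquiv hf hs hfs (hE K hJK (i + t)) (hE K hJK (i + t + 1))).symm.trans
      (e.trans (congr K i (connectingEquiv hf hs hfs (hE J le_rfl t) (hE J le_rfl (t + 1)))))⟩

lemma nonempty_linearEquiv_idealTorsion (hJK : J ≤ K) {t : ℕ}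
    (hN : ∀ i ≠ t, Subsingleton (LocCohom J i N)) :
    Nonempty (LocCohom K t N ≃ₗ[A] idealTorsion K (LocCohom J t N)) := by
  obtain ⟨e⟩ := nonempty_linearEquiv_of_forall_ne hJK hN 0
  rw [zero_add] at e
  exact ⟨e ≪≫ₗ zeroEquiv K _⟩

end LocCohom

end Composite

namespace LocCohom

section RegularSequence

variable {A : Type u} [CommRing A] {J : Ideal A} {N : Type u} [AddCommGroup N] [Module A N]
variable {rs : List A}

lemma subsingleton_of_injective_map_lsmul {i : ℕ} {x : A} (hx : x ∈ J)
    (h : Function.Injective (map J i (LinearMap.lsmul A N x))) : Subsingleton (LocCohom J i N) :=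
  subsingleton_of_smul_injective hx (by rwa [map_lsmul] at h)

lemma subsingleton_of_isWeaklyRegular (hrs : IsWeaklyRegular N rs) (hJ : Ideal.ofList rs ≤ J)
    {i : ℕ} (hi : i < rs.length) : Subsingleton (LocCohom J i N) := by
  induction rs generalizing N i with
  | nil => exact absurd hi (Nat.not_lt_zero i)
  | cons x rs ih =>
    obtain ⟨hx, hrs⟩ := (isWeaklyRegular_cons_iff N x rs).1 hrs
    rw [Ideal.ofList_cons, sup_le_iff, Ideal.span_singleton_le_iff_mem] at hJ
    refine subsingleton_of_injective_map_lsmul hJ.1 ?_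
    cases i with
    | zero => exact map_zero_injective hx
    | succ i =>
      exact map_injective_of_right hx (Submodule.mkQ_surjective _)
        (LinearMap.exact_lsmul_mkQ_smul_top N x) (ih hrs hJ.2 (Nat.lt_of_succ_lt_succ hi))

lemma subsingleton_of_length_lt (hrs : IsWeaklyRegular N rs) (hJ : Ideal.ofList rs ≤ J)
    (hN : ∀ i, 0 < i → Subsingleton (LocCohom J i (N ⧸ (Ideal.ofList rs • ⊤ : Submodule A N))))
    {i : ℕ} (hi : rs.length < i) : Subsingleton (LocCohom J i N) := by
  induction rs generalizing N i with
  | nil =>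
    have := hN i hi
    exact (congr J i (Submodule.quotEquivOfEqBot _ (by simp))).toEquiv.subsingleton_congr.1 this
  | cons x rs ih =>
    obtain ⟨hx, hrs⟩ := (isWeaklyRegular_cons_iff N x rs).1 hrs
    rw [Ideal.ofList_cons, sup_le_iff, Ideal.span_singleton_le_iff_mem] at hJ
    obtain ⟨i, rfl⟩ := Nat.exists_eq_succ_of_ne_zero hi.ne_bot
    refine subsingleton_of_injective_map_lsmul hJ.1 (map_injective_of_right hx
      (Submodule.mkQ_surjective _) (LinearMap.exact_lsmul_mkQ_smul_top N x)
      (ih hrs hJ.2 (fun j hj ↦ ?_) (Nat.lt_of_succ_lt_succ hi)))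
    exact (congr J j (Submodule.quotOfListConsSMulTopEquivQuotSMulTopInner N x
      rs)).toEquiv.subsingleton_congr.1 (hN j hj)

lemma nontrivial_of_isWeaklyRegular (hrs : IsWeaklyRegular N rs) (hJ : Ideal.ofList rs ≤ J)
    (hN : Nontrivial (LocCohom J 0 (N ⧸ (Ideal.ofList rs • ⊤ : Submodule A N)))) :
    Nontrivial (LocCohom J rs.length N) := by
  induction rs generalizing N with
  | nil =>
    exact (congr J 0 (Submodule.quotEquivOfEqBot _ (by simp))).toEquiv.nontrivial_congr.1 hN
  | cons x rs ih =>
    have hlen := subsingleton_of_isWeaklyRegular hrs hJ rs.length.lt_succ_self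
    obtain ⟨hx, hrs⟩ := (isWeaklyRegular_cons_iff N x rs).1 hrs
    rw [Ideal.ofList_cons, sup_le_iff] at hJ
    have := ih hrs hJ.2 ((congr J 0 (Submodule.quotOfListConsSMulTopEquivQuotSMulTopInner N x
      rs)).toEquiv.nontrivial_congr.1 hN)
    exact (connecting_injective (f := LinearMap.lsmul A N x) hx (Submodule.mkQ_surjective _)
      (LinearMap.exact_lsmul_mkQ_smul_top N x) hlen).nontrivial

variable [IsNoetherianRing A]

lemma subsingleton_of_ne_length (hrs : IsWeaklyRegular N rs) {i : ℕ} (hi : i ≠ rs.length) :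
    Subsingleton (LocCohom (Ideal.ofList rs) i N) :=
  hi.lt_or_gt.elim (subsingleton_of_isWeaklyRegular hrs le_rfl)
    (subsingleton_of_length_lt hrs le_rfl fun _ ↦
      subsingleton_of_idealTorsion_eq_top idealTorsion_quotient_smul_top)

/- An associated prime of a `J`-torsion module contains `J`, so its generator is killed by `x ∈ J`
and comes from `H^i_J(N ⧸ xN)` through the connecting homomorphism. -/
lemma associatedPrimes_succ_subset {i : ℕ} {x : A} (hxJ : x ∈ J)
    (hx : Function.Injective (LinearMap.lsmul A N x))
    (hi : Subsingleton (LocCohom J i N)) :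
    associatedPrimes A (LocCohom J (i + 1) N) ⊆
      associatedPrimes A (LocCohom J i (QuotSMulTop x N)) := by
  intro p hp
  obtain ⟨hpp, m, rfl⟩ := isAssociatedPrime_iff.1 hp
  have hxm : x • m = 0 := by
    obtain ⟨n, hn⟩ := exists_pow_smul_eq_zero m
    have hxn : x ^ n ∈ Submodule.colon ⊥ {m} :=
      Submodule.mem_colon_singleton.2 (hn _ (Ideal.pow_mem_pow hxJ n))
    exact Submodule.mem_colon_singleton.1 (hpp.mem_of_pow_mem n hxn)
  have hex := LinearMap.exact_lsmul_mkQ_smul_top N x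
  obtain ⟨y, rfl⟩ := (exact_connecting_map J i hx (Submodule.mkQ_surjective _) hex m).1
    (by rwa [map_lsmul])
  refine isAssociatedPrime_iff.2 ⟨hpp, y, Submodule.ext fun r ↦ ?_⟩
  rw [Submodule.mem_colon_singleton, Submodule.mem_colon_singleton, Submodule.mem_bot,
    Submodule.mem_bot, ← _root_.map_smul, map_eq_zero_iff _
      (connecting_injective hx (Submodule.mkQ_surjective _) hex hi)]

lemma associatedPrimes_subset_of_isWeaklyRegular (hrs : IsWeaklyRegular N rs)
    (hJ : Ideal.ofList rs ≤ J) :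
    associatedPrimes A (LocCohom J rs.length N) ⊆
      associatedPrimes A (N ⧸ (Ideal.ofList rs • ⊤ : Submodule A N)) := by
  induction rs generalizing N with
  | nil =>
    exact (associatedPrimes.subset_of_injective (f := evalOne J N) evalOne_injective).trans
      (associatedPrimes.subset_of_injective
        (Submodule.quotEquivOfEqBot (Ideal.ofList [] • ⊤ : Submodule A N) (by simp)).symm.injective)
  | cons x rs ih =>
    have hlen := subsingleton_of_isWeaklyRegular hrs hJ rs.length.lt_succ_self
    obtain ⟨hx, hrs⟩ := (isWeaklyRegular_cons_iff N x rs).1 hrs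
    rw [Ideal.ofList_cons, sup_le_iff, Ideal.span_singleton_le_iff_mem] at hJ
    exact (associatedPrimes_succ_subset hJ.1 hx hlen).trans ((ih hrs hJ.2).trans
      (associatedPrimes.subset_of_injective
        (Submodule.quotOfListConsSMulTopEquivQuotSMulTopInner N x rs).symm.injective))

end RegularSequence

end LocCohom

section AssociatedPrimes

variable {A : Type u} [CommRing A] {N : Type u} [AddCommGroup N] [Module A N] {a c J : Ideal A}

lemma le_of_mem_associatedPrimes_quotient_smul_top {p : Ideal A}
    (hp : p ∈ associatedPrimes A (N ⧸ (J • ⊤ : Submodule A N))) : J ≤ p := by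
  refine fun r hr ↦ IsAssociatedPrime.annihilator_le hp (Submodule.mem_annihilator.2 fun y _ ↦ ?_)
  obtain ⟨n, rfl⟩ := Submodule.mkQ_surjective _ y
  exact (Submodule.Quotient.mk_eq_zero _).2 (Submodule.smul_mem_smul hr Submodule.mem_top)

lemma idealTorsion_quotient_eq_top_of_mul (h : idealTorsion (c * a) N = ⊤) :
    idealTorsion a (N ⧸ idealTorsion c N) = ⊤ := by
  refine Submodule.eq_top_iff'.2 fun y ↦ ?_
  obtain ⟨n, rfl⟩ := Submodule.mkQ_surjective _ y
  obtain ⟨q, hq⟩ := mem_idealTorsion.1 (h.ge (Submodule.mem_top (x := n)))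
  refine mem_idealTorsion.2 ⟨q, fun r hr ↦ ?_⟩
  refine (Submodule.Quotient.mk_eq_zero _).2 (mem_idealTorsion.2 ⟨q, fun s hs ↦ ?_⟩)
  rw [smul_smul]
  exact hq _ (mul_pow c a q ▸ Ideal.mul_mem_mul hs hr)

lemma idealTorsion_eq_top_of_forall_le [IsNoetherianRing A]
    (h : ∀ p ∈ associatedPrimes A N, J ≤ p) : idealTorsion J N = ⊤ := by
  refine Submodule.eq_top_iff'.2 fun n ↦ mem_idealTorsion_iff_le_radical.2 ?_
  rw [← Ideal.sInf_minimalPrimes]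
  refine le_sInf fun p hp ↦ h p ?_
  rw [← Ideal.annihilator_span_singleton_eq_torsionOf] at hp
  exact associatedPrimes.subset_of_injective (Submodule.span A {n}).injective_subtype
    (Module.associatedPrimes.minimalPrimes_annihilator_subset_associatedPrimes A _ hp)

lemma idealTorsion_quotient_eq_top_of_forall_le_or_le [IsNoetherianRing A]
    (h : ∀ p ∈ associatedPrimes A N, c ≤ p ∨ a ≤ p) :
    idealTorsion a (N ⧸ idealTorsion c N) = ⊤ :=
  idealTorsion_quotient_eq_top_of_mul <| idealTorsion_eq_top_of_forall_le fun p hp ↦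
    (h p hp).elim (fun hc ↦ Ideal.mul_le_left.trans hc) fun ha ↦ Ideal.mul_le_right.trans ha

end AssociatedPrimes

section CohomologicalDimension

variable {A : Type u} [CommRing A] {a : Ideal A}
variable {N Q : Type u} [AddCommGroup N] [Module A N] [AddCommGroup Q] [Module A Q]

lemma le_cohDim {i : ℕ} (h : Nontrivial (LocCohom a i N)) : (i : ℕ∞) ≤ cohDim a N :=
  le_sSup ⟨i, rfl, (localCohomologyEquiv a i N).toEquiv.nontrivial_congr.2 h⟩

lemma cohDim_le {n : ℕ∞} (h : ∀ i : ℕ, Nontrivial (LocCohom a i N) → (i : ℕ∞) ≤ n) :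
    cohDim a N ≤ n := by
  refine sSup_le ?_
  rintro _ ⟨i, rfl, hi⟩
  exact h i ((localCohomologyEquiv a i N).toEquiv.nontrivial_congr.1 hi)

variable (a) in
lemma cohDim_congr (e : N ≃ₗ[A] Q) : cohDim a N = cohDim a Q :=
  have he (i : ℕ) := (LocCohom.congr a i e).toEquiv.nontrivial_congr
  le_antisymm (cohDim_le fun i hi ↦ le_cohDim ((he i).1 hi))
    (cohDim_le fun i hi ↦ le_cohDim ((he i).2 hi))

lemma cohDim_eq_add [IsNoetherianRing A] {I : Ideal A} {t : ℕ} (hIa : I ≤ a)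
    (hI : ∀ i ≠ t, Subsingleton (LocCohom I i N)) (hta : Nontrivial (LocCohom a t N)) :
    cohDim a N = cohDim a (LocCohom I t N) + t := by
  have h (i : ℕ) : Nontrivial (LocCohom a (i + t) N) ↔ Nontrivial (LocCohom a i (LocCohom I t N)) :=
    (LocCohom.nonempty_linearEquiv_of_forall_ne hIa hI i).some.toEquiv.nontrivial_congr
  refine le_antisymm (cohDim_le fun i hi ↦ ?_)
    (add_le_of_le_tsub_right_of_le (le_cohDim hta) (cohDim_le fun i hi ↦ ?_))
  · rcases lt_or_ge i t with hit | hit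
    · exact absurd (LocCohom.subsingleton_of_forall_le hIa fun j hj ↦ hI j (hj.trans_lt hit).ne)
        (not_subsingleton_iff_nontrivial.2 hi)
    · obtain ⟨j, rfl⟩ := Nat.exists_eq_add_of_le' hit
      push_cast
      gcongr
      exact le_cohDim ((h j).1 hi)
  · exact ENat.le_sub_of_add_le_right (ENat.natCast_ne_top t)
      (by exact_mod_cast le_cohDim ((h i).2 hi))

lemma cohDim_eq_zero_or_eq_of_idealTorsion_quotient_eq_top [IsNoetherianRing A] {G : Submodule A N}
    (h : idealTorsion a (N ⧸ G) = ⊤) : cohDim a N = 0 ∨ cohDim a N = cohDim a G := by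
  have hG := LinearMap.exact_subtype_mkQ G
  have hQ (i : ℕ) (hi : 0 < i) : Subsingleton (LocCohom a i (N ⧸ G)) :=
    LocCohom.subsingleton_of_idealTorsion_eq_top h hi
  refine or_iff_not_imp_left.2 fun hN ↦
    le_antisymm (cohDim_le fun i hi ↦ ?_) (cohDim_le fun i hi ↦ ?_)
  · rcases i.eq_zero_or_pos with rfl | hi₀
    · exact zero_le
    · exact le_cohDim (LocCohom.map_surjective_of_right G.injective_subtype G.mkQ_surjective hG
        (hQ i hi₀)).nontrivial
  · match i with
    | 0 => exact zero_le
    | 1 => exact_mod_cast Order.one_le_iff_ne_zero.2 hN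
    | i + 2 =>
      exact le_cohDim (LocCohom.map_injective_of_right G.injective_subtype G.mkQ_surjective hG
        (hQ (i + 1) i.succ_pos)).nontrivial

end CohomologicalDimension

section Linkage

variable {A : Type u} [CommRing A] {N : Type u} [AddCommGroup N] [Module A N] {I a b : Ideal A}

lemma mem_modColon {G : Submodule A N} {m : N} :
    m ∈ Submodule.modColon G a ↔ ∀ r ∈ a, r • m ∈ G := by
  simp [Submodule.modColon]

lemma idealTorsion_quotient_ne_bot_of_isLinkedBy (h : Ideal.IsLinkedBy N I a b) :
    idealTorsion a (N ⧸ (I • (⊤ : Submodule A N))) ≠ ⊥ := by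
  obtain ⟨-, -, ha, -, hb, ha'⟩ := h
  refine fun hbot ↦ ha (ha' ▸ Submodule.eq_top_iff'.2 fun m ↦ mem_modColon.2 fun r hr ↦ ?_)
  have hrm : r • m ∈ Submodule.modColon (I • (⊤ : Submodule A N)) a :=
    hb ▸ Submodule.smul_mem_smul hr Submodule.mem_top
  have hmk : Submodule.Quotient.mk (r • m) ∈ idealTorsion a (N ⧸ (I • (⊤ : Submodule A N))) :=
    mem_idealTorsion.2 ⟨1, fun s hs ↦ (Submodule.Quotient.mk_eq_zero _).2
      (mem_modColon.1 hrm s (pow_one a ▸ hs))⟩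
  rwa [hbot, Submodule.mem_bot, Submodule.Quotient.mk_eq_zero] at hmk

end Linkage

section Grade

variable {A : Type u} [CommRing A] {N : Type u} [AddCommGroup N] [Module A N] {a : Ideal A}

lemma gradeM_eq_length {rs : List A} (hrs : IsRegular N rs) (hrsa : Ideal.ofList rs ≤ a)
    (h : Nontrivial (LocCohom a rs.length N)) : gradeM a N = rs.length := by
  refine IsGreatest.csSup_eq ⟨⟨rs, rfl, fun r hr ↦ hrsa (Ideal.subset_span hr), hrs⟩, ?_⟩
  rintro _ ⟨rs', rfl, hrs'a, hrs'⟩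
  by_contra hlt
  exact not_subsingleton_iff_nontrivial.2 h (LocCohom.subsingleton_of_isWeaklyRegular
    hrs'.toIsWeaklyRegular (Ideal.span_le.2 hrs'a) (not_le.1 hlt))

theorem stmt9_general [IsNoetherianRing A] {I : Ideal A}
    (hI : ∃ rs : List A, IsRegular N rs ∧ I = Ideal.ofList rs) (hIa : I ≤ a)
    (ha : idealTorsion a (N ⧸ (I • (⊤ : Submodule A N))) ≠ ⊥) :
    cohDim a N = (gradeM a N : ℕ∞) ∨
      cohDim a N =
        cohDim a
          ↥((localCohomology
              (sInf {p | p ∈ associatedPrimes A (N ⧸ (I • (⊤ : Submodule A N))) ∧ ¬ a ≤ p})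
              (gradeM a N)).obj (ModuleCat.of A N)) +
          (gradeM a N : ℕ∞) := by
  obtain ⟨rs, hrs, rfl⟩ := hI
  have hta := LocCohom.nontrivial_of_isWeaklyRegular hrs.toIsWeaklyRegular hIa
    (not_subsingleton_iff_nontrivial.1 (mt LocCohom.subsingleton_zero_iff.1 ha))
  rw [gradeM_eq_length hrs hIa hta]
  set I := Ideal.ofList rs
  set t := rs.length
  set c := sInf {p | p ∈ associatedPrimes A (N ⧸ (I • (⊤ : Submodule A N))) ∧ ¬ a ≤ p}
  have hconc (i : ℕ) : i ≠ t → Subsingleton (LocCohom I i N) :=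
    LocCohom.subsingleton_of_ne_length hrs.toIsWeaklyRegular
  have hIc : I ≤ c := le_sInf fun p hp ↦ le_of_mem_associatedPrimes_quotient_smul_top hp.1
  have htc : cohDim a ((localCohomology c t).obj (ModuleCat.of A N)) =
      cohDim a (idealTorsion c (LocCohom I t N)) :=
    cohDim_congr a (localCohomologyEquiv c t N ≪≫ₗ
      (LocCohom.nonempty_linearEquiv_idealTorsion hIc hconc).some)
  have hac : idealTorsion a (LocCohom I t N ⧸ idealTorsion c (LocCohom I t N)) = ⊤ :=
    idealTorsion_quotient_eq_top_of_forall_le_or_le fun p hp ↦ or_iff_not_imp_right.2 fun hap ↦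
      sInf_le ⟨LocCohom.associatedPrimes_subset_of_isWeaklyRegular hrs.toIsWeaklyRegular le_rfl hp,
        hap⟩
  rw [htc, cohDim_eq_add hIa hconc hta]
  exact (cohDim_eq_zero_or_eq_of_idealTorsion_quotient_eq_top hac).imp
    (fun h ↦ by rw [h, zero_add]) (fun h ↦ by rw [h])

end Grade

theorem stmt9 (I a : Ideal R) (h : ∃ b, Ideal.IsLinkedBy M I a b)
    (hass : ∀ p ∈ associatedPrimes R (M ⧸ (I • (⊤ : Submodule R M))),
      ∀ q ∈ associatedPrimes R (M ⧸ (I • (⊤ : Submodule R M))), q ≤ p → q = p) :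
    cohDim a M = (gradeM a M : ℕ∞) ∨
      cohDim a M =
        cohDim a
          ↥((localCohomology
              (sInf {p | p ∈ associatedPrimes R (M ⧸ (I • (⊤ : Submodule R M))) ∧ ¬ a ≤ p})
              (gradeM a M)).obj (ModuleCat.of R M)) +
          (gradeM a M : ℕ∞) := by
  obtain ⟨b, hb⟩ := h
  exact stmt9_general hb.1 (hb.2.1.trans inf_le_left)
    (idealTorsion_quotient_ne_bot_of_isLinkedBy hb)
end
end

section
/- Let a and b be proper ideals of a Noetherian local ring R and M a nonzero finitely generated R-module with aM ≠ M ≠ bM, bM = 0 :_M a, aM = 0 :_M b, and aM ∩ bM = 0. Then grade_M(a + b) = 1; in particular, it is impossible that M ≅ aM ⊕ bM with both summands nonzero unless a contradiction arises: indeed, if grade_M(a+b) > 1 then M = aM ⊕ bM, and since abM = 0, Krull's intersection theorem forces bM = 0 and aM = M, a contradiction. -/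
universe u

open RingTheory.Sequence CategoryTheory

noncomputable section

variable {R : Type u} [CommRing R] [IsNoetherianRing R] [IsLocalRing R]
variable {M : Type u} [AddCommGroup M] [Module R M] [Module.Finite R M] [Nontrivial M]

/-
Write `A` and `B` for the annihilators of `a` and `b` in `M`. As `ab` kills `M`, an element
`x = a₁ + b₁` of `a + b` acts as `a₁` on `B` and as `b₁` on `A`. Let `x, y = a₂ + b₂` be a weakly
`M`-regular sequence in `a + b`. Then `y a₁ m = a₁ a₂ m = x a₂ m`, so regularity of `y` on `M / xM`
gives `a₁ m = x n` for some `n`. Since `x` is a nonzerodivisor on `M`, `b` kills `n` and `a` kills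
`m - n`; thus `M = A + B`. For linked ideals this says `M = (a + b)M`, against Nakayama's lemma.
On the other hand no nonzero element of `M` is killed by `a + b`, so prime avoidance provides a
single nonzerodivisor.
-/

section Torsion

open Submodule

variable {S N : Type*} [CommRing S] [AddCommGroup N] [Module S N] {I J : Ideal S}

theorem torsionBySet_sup_ideal (I J : Ideal S) :
    torsionBySet S N ↑(I ⊔ J) = torsionBySet S N I ⊓ torsionBySet S N J := by
  refine le_antisymm
    (le_inf (torsionBySet_le_torsionBySet_of_subset (le_sup_left (a := I)))
      (torsionBySet_le_torsionBySet_of_subset (le_sup_right (a := I)))) fun m hm ↦ ?_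
  simp only [mem_inf, mem_torsionBySet_iff, SetLike.coe_sort_coe, Subtype.forall] at hm ⊢
  intro r hr
  obtain ⟨s, hs, t, ht, rfl⟩ := mem_sup.1 hr
  rw [add_smul, hm.1 s hs, hm.2 t ht, add_zero]

theorem smul_top_le_torsionBySet_iff :
    J • (⊤ : Submodule S N) ≤ torsionBySet S N I ↔ I * J ≤ Module.annihilator S N := by
  simp only [smul_le, Ideal.mul_le, mem_top, true_imp_iff, mem_torsionBySet_iff,
    SetLike.coe_sort_coe, Subtype.forall, Module.mem_annihilator, mul_smul]
  exact ⟨fun h r hr s hs m ↦ h s hs m r hr, fun h s hs m r hr ↦ h r hr s hs m⟩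

theorem sup_smul_top_le_sup_torsionBySet (h : I * J ≤ Module.annihilator S N) :
    (I ⊔ J) • (⊤ : Submodule S N) ≤ torsionBySet S N I ⊔ torsionBySet S N J := by
  rw [sup_smul, sup_comm]
  exact sup_le_sup (smul_top_le_torsionBySet_iff.2 h)
    (smul_top_le_torsionBySet_iff.2 (mul_comm I J ▸ h))

theorem exists_isSMulRegular_of_torsionBySet_eq_bot [IsNoetherianRing S] [Module.Finite S N]
    (h : torsionBySet S N I = ⊥) : ∃ x ∈ I, IsSMulRegular N x := by
  have hom_eq_zero : Subsingleton (S ⧸ I →ₗ[S] N) := by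
    refine subsingleton_of_forall_eq 0 fun f ↦ Submodule.linearMap_qext _ (LinearMap.ext_ring ?_)
    have map_one_mem : f (Ideal.Quotient.mk I 1) ∈ torsionBySet S N I := by
      rw [mem_torsionBySet_iff]
      rintro ⟨r, hr⟩
      rw [← map_smul, ← Ideal.Quotient.mk_eq_mk, ← Submodule.Quotient.mk_smul, smul_eq_mul,
        mul_one, (Submodule.Quotient.mk_eq_zero I).2 hr, map_zero]
    rwa [h, mem_bot] at map_one_mem
  simpa only [Ideal.annihilator_quotient] using
    IsSMulRegular.subsingleton_linearMap_iff.1 hom_eq_zero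

theorem sup_torsionBySet_eq_top_of_isWeaklyRegular_pair (h : I * J ≤ Module.annihilator S N)
    {x y : S} (hx : x ∈ I ⊔ J) (hy : y ∈ I ⊔ J) (hreg : IsWeaklyRegular N [x, y]) :
    torsionBySet S N I ⊔ torsionBySet S N J = ⊤ := by
  simp only [isWeaklyRegular_cons_iff, IsWeaklyRegular.nil, and_true] at hreg
  obtain ⟨hx_reg, hy_reg⟩ := hreg
  obtain ⟨a₁, ha₁, b₁, hb₁, rfl⟩ := mem_sup.1 hx
  obtain ⟨a₂, ha₂, b₂, hb₂, rfl⟩ := mem_sup.1 hy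
  have mul_kills {r s : S} (hr : r ∈ I) (hs : s ∈ J) (m : N) : r • s • m = 0 := by
    rw [← mul_smul]
    exact Module.mem_annihilator.1 (h (Ideal.mul_mem_mul hr hs)) m
  have mul_kills' {r s : S} (hr : r ∈ I) (hs : s ∈ J) (m : N) : s • r • m = 0 := by
    rw [smul_comm, mul_kills hr hs]
  refine eq_top_iff'.2 fun m ↦ ?_
  have swap : (a₂ + b₂) • a₁ • m = (a₁ + b₁) • a₂ • m := by
    rw [add_smul, add_smul, mul_kills' ha₁ hb₂, mul_kills' ha₂ hb₁, smul_comm]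
  obtain ⟨n, -, hn⟩ := (mem_smul_pointwise_iff_exists _ _ _).1 <|
    mem_of_isSMulRegular_quotient_of_smul_mem hy_reg
      (swap ▸ smul_mem_pointwise_smul (a₂ • m) (a₁ + b₁) ⊤ mem_top)
  have hn_mem : n ∈ torsionBySet S N J := by
    refine (mem_torsionBySet_iff _ _).2 fun ⟨s, hs⟩ ↦ hx_reg.right_eq_zero_of_smul ?_
    rw [smul_comm, hn, mul_kills' ha₁ hs]
  have hmn_mem : m - n ∈ torsionBySet S N I := by
    refine (mem_torsionBySet_iff _ _).2 fun ⟨r, hr⟩ ↦ hx_reg.right_eq_zero_of_smul ?_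
    rw [smul_comm, smul_sub, hn, add_smul, add_sub_cancel_left, mul_kills hr hb₁]
  exact mem_sup.2 ⟨m - n, hmn_mem, n, hn_mem, sub_add_cancel m n⟩

end Torsion

section Grade

open Submodule

variable {S N : Type u} [CommRing S] [AddCommGroup N] [Module S N]

theorem gradeM_eq_one {I : Ideal S} (htop : I • (⊤ : Submodule S N) ≠ ⊤)
    (hone : ∃ x ∈ I, IsSMulRegular N x)
    (htwo : ∀ x ∈ I, ∀ y ∈ I, ¬ IsWeaklyRegular N [x, y]) : gradeM I N = 1 := by
  obtain ⟨x, hxI, hx⟩ := hone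
  refine IsGreatest.csSup_eq ⟨⟨[x], rfl, by simpa using hxI, ?_⟩, ?_⟩
  · refine ⟨(isWeaklyRegular_singleton_iff N x).2 hx, fun hx_top ↦ htop ?_⟩
    exact top_le_iff.1 (hx_top.le.trans (smul_mono_left (Ideal.span_le.2 (by simpa using hxI))))
  · rintro _ ⟨rs, rfl, hrs, hreg⟩
    match rs with
    | [] | [_] => simp
    | x :: y :: rs =>
      have hpair : IsWeaklyRegular N [x, y] :=
        ((isWeaklyRegular_append_iff N [x, y] rs).1 hreg.toIsWeaklyRegular).1
      exact absurd hpair (htwo x (hrs x (by simp)) y (hrs y (by simp)))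

theorem stmt12_general [IsNoetherianRing S] [Module.Finite S N] (a b : Ideal S)
    (hmul : a * b ≤ Module.annihilator S N)
    (hdisj : Disjoint (torsionBySet S N a) (torsionBySet S N b))
    (hsup : torsionBySet S N a ⊔ torsionBySet S N b ≠ ⊤) :
    gradeM (a + b) N = 1 := by
  refine gradeM_eq_one ?_ ?_ ?_
  · exact ne_top_of_le_ne_top hsup (sup_smul_top_le_sup_torsionBySet hmul)
  · refine exists_isSMulRegular_of_torsionBySet_eq_bot ?_
    exact (torsionBySet_sup_ideal a b).trans hdisj.eq_bot
  · exact fun x hx y hy hreg ↦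
      hsup (sup_torsionBySet_eq_top_of_isWeaklyRegular_pair hmul hx hy hreg)

end Grade

section Linkage

open Submodule

variable {S N : Type u} [CommRing S] [AddCommGroup N] [Module S N] {I J : Ideal S}

theorem modColon_bot_smul_top (I : Ideal S) :
    modColon ((⊥ : Ideal S) • (⊤ : Submodule S N)) I = torsionBySet S N I := by
  ext m
  simp [modColon]

theorem torsionBySet_left_eq_of_isLinkedBy_bot (h : Ideal.IsLinkedBy N ⊥ I J) :
    torsionBySet S N I = J • ⊤ := by
  obtain ⟨-, -, -, -, hIJ, -⟩ := h
  rw [← modColon_bot_smul_top, hIJ]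

theorem torsionBySet_right_eq_of_isLinkedBy_bot (h : Ideal.IsLinkedBy N ⊥ I J) :
    torsionBySet S N J = I • ⊤ := by
  obtain ⟨-, -, -, -, -, hJI⟩ := h
  rw [← modColon_bot_smul_top, hJI]

theorem mul_le_annihilator_of_isLinkedBy_bot (h : Ideal.IsLinkedBy N ⊥ I J) :
    I * J ≤ Module.annihilator S N :=
  smul_top_le_torsionBySet_iff.1 (torsionBySet_left_eq_of_isLinkedBy_bot h).ge

theorem disjoint_torsionBySet_of_isLinkedBy_bot (h : Ideal.IsLinkedBy N ⊥ I J)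
    (hgeo : I • (⊤ : Submodule S N) ⊓ J • (⊤ : Submodule S N) = ⊥) :
    Disjoint (torsionBySet S N I) (torsionBySet S N J) := by
  rw [torsionBySet_left_eq_of_isLinkedBy_bot h, torsionBySet_right_eq_of_isLinkedBy_bot h]
  exact (disjoint_iff.2 hgeo).symm

theorem sup_torsionBySet_ne_top_of_isLinkedBy_bot [IsLocalRing S] [Module.Finite S N]
    [Nontrivial N] (h : Ideal.IsLinkedBy N ⊥ I J) (hI : I ≠ ⊤) (hJ : J ≠ ⊤) :
    torsionBySet S N I ⊔ torsionBySet S N J ≠ ⊤ := by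
  rw [torsionBySet_left_eq_of_isLinkedBy_bot h, torsionBySet_right_eq_of_isLinkedBy_bot h,
    ← sup_smul]
  have sup_le_jacobson : J ⊔ I ≤ (Module.annihilator S N).jacobson :=
    (sup_le (IsLocalRing.le_maximalIdeal hJ) (IsLocalRing.le_maximalIdeal hI)).trans
      (IsLocalRing.maximalIdeal_le_jacobson _)
  exact (top_ne_ideal_smul_of_le_jacobson_annihilator sup_le_jacobson).symm

end Linkage

theorem stmt12 (a b : Ideal R) (ha : a ≠ ⊤) (hb : b ≠ ⊤)
    (h : Ideal.IsLinkedBy M ⊥ a b)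
    (hgeo : a • (⊤ : Submodule R M) ⊓ b • (⊤ : Submodule R M) = ⊥) :
    gradeM (a + b) M = 1 :=
  stmt12_general a b (mul_le_annihilator_of_isLinkedBy_bot h)
    (disjoint_torsionBySet_of_isLinkedBy_bot h hgeo)
    (sup_torsionBySet_ne_top_of_isLinkedBy_bot h ha hb)
end
end
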